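/- arXiv:2307.13916 — 2 statements merged into one kernel-verified Lean document; each statement's English description precedes it below -/
import Mathlib

section
/- Fix integers 0 ≤ T₀ < T, constants R_θ > 0, ρ ∈ (0,1), p₀ ∈ (0, 1/2], and θ*_0, θ*_1 ∈ ℝ^d with ‖θ*_a‖₂ ≤ R_θ. For each t ∈ {1,…,T} let x_t, ε_t ∈ ℝ^d with ‖x_t‖₂ ≤ 1, x̃_t := x_t + ε_t, ‖x̃_t‖₂ ≤ 1, and |⟨θ*_1 − θ*_0, ε_t⟩| ≤ ρ·|⟨θ*_1 − θ*_0, x_t⟩|. For t ≤ T₀ let π_t(0), π_t(1) ≥ p₀ be arbitrary with π_t(0)+π_t(1) = 1. For t > T₀ let θ̂_0^{(t−1)}, θ̂_1^{(t−1)} ∈ ℝ^d be arbitrary, let ã_t ∈ argmax_{a∈{0,1}} ⟨θ̂_a^{(t−1)}, x̃_t⟩, and set π_t(ã_t) = 1 − p₀, π_t(1−ã_t) = p₀. Let a*_t ∈ argmax_{a∈{0,1}} ⟨θ*_a, x_t⟩ and define the clipped benchmark π̄*_t(a*_t) = 1 − p₀, π̄*_t(1−a*_t) = p₀. Then Σ_{t=1}^T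 [Σ_{a∈{0,1}} π̄*_t(a)·⟨θ*_a, x_t⟩ − Σ_{a∈{0,1}} π_t(a)·⟨θ*_a, x_t⟩] ≤ 2·T₀·R_θ + (2·(1−2p₀)/(1−ρ))·Σ_{t=T₀+1}^T max_{a∈{0,1}} ‖θ̂_a^{(t−1)} − θ*_a‖₂. -/
open RealInnerProductSpace Finset

/-!
With `K` arms, the clipped policy around an arm `b` is the constant exploration part `p` plus an
excess mass `1 - K * p` on `b`. Hence the values of two clipped policies differ by `1 - K * p` times
the reward gap between the arms they favour. If the greedy arm is not optimal, its estimated reward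
at the noisy context is still at least that of the optimal arm, so by Cauchy–Schwarz the true gap at
the noisy context is at most twice the estimation error; the noise shrinks the gap by a factor no
smaller than `1 - ρ`. A warm-up round costs at most `2 * R`, since all rewards lie in `[-R, R]`.
-/

section Value

variable {ι E : Type*} [Fintype ι] [NormedAddCommGroup E] [InnerProductSpace ℝ E]

/-- The expected reward at context `x` of drawing an arm `a` with probability `q a` when the arms
have linear rewards with parameters `θ`. -/
def policyValue (q : ι → ℝ) (θ : ι → E) (x : E) : ℝ :=
  ∑ a, q a * ⟪θ a, x⟫

lemma abs_policyValue_le {q : ι → ℝ} {θ : ι → E} {x : E} {R : ℝ} (hq : q ∈ stdSimplex ℝ ι)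
    (hθ : ∀ a, ‖θ a‖ ≤ R) (hx : ‖x‖ ≤ 1) : |policyValue q θ x| ≤ R := by
  have hreward (a : ι) : |⟪θ a, x⟫| ≤ R :=
    (abs_real_inner_le_norm _ _).trans
      ((mul_le_of_le_one_right (norm_nonneg _) hx).trans (hθ a))
  calc |policyValue q θ x|
      ≤ ∑ a, |q a * ⟪θ a, x⟫| := abs_sum_le_sum_abs _ _
    _ ≤ ∑ a, q a * R := by
        gcongr with a
        rw [abs_mul, abs_of_nonneg (hq.1 a)]
        exact mul_le_mul_of_nonneg_left (hreward a) (hq.1 a)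
    _ = R := by rw [← sum_mul, hq.2, one_mul]

lemma policyValue_sub_policyValue_le {q q' : ι → ℝ} {θ : ι → E} {x : E} {R : ℝ}
    (hq : q ∈ stdSimplex ℝ ι) (hq' : q' ∈ stdSimplex ℝ ι) (hθ : ∀ a, ‖θ a‖ ≤ R)
    (hx : ‖x‖ ≤ 1) : policyValue q θ x - policyValue q' θ x ≤ 2 * R := by
  have h := (abs_le.mp (abs_policyValue_le hq hθ hx)).2
  have h' := (abs_le.mp (abs_policyValue_le hq' hθ hx)).1
  linarith

end Value

section ClippedPolicy

variable {ι E : Type*} [Fintype ι] [DecidableEq ι] [NormedAddCommGroup E] [InnerProductSpace ℝ E]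

/-- The clipped policy favouring the arm `b`: every other arm keeps the exploration probability `p`
and `b` receives the remaining mass. It serves both as the benchmark (`b` optimal) and as the greedy
policy (`b` greedy). -/
def clippedPolicy (p : ℝ) (b : ι) : ι → ℝ :=
  fun a => if a = b then 1 - (Fintype.card ι - 1) * p else p

lemma clippedPolicy_apply_eq_add_ite (p : ℝ) (b a : ι) :
    clippedPolicy p b a = p + if a = b then 1 - Fintype.card ι * p else 0 := by
  unfold clippedPolicy
  split_ifs <;> ring

lemma clippedPolicy_mem_stdSimplex {p : ℝ} (hp : 0 ≤ p) (hcard : Fintype.card ι * p ≤ 1) (b : ι) :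
    clippedPolicy p b ∈ stdSimplex ℝ ι := by
  constructor
  · intro a
    rw [clippedPolicy_apply_eq_add_ite]
    split_ifs <;> linarith
  · simp [clippedPolicy_apply_eq_add_ite, sum_add_distrib]

lemma policyValue_clippedPolicy (p : ℝ) (b : ι) (θ : ι → E) (x : E) :
    policyValue (clippedPolicy p b) θ x =
      p * ∑ a, ⟪θ a, x⟫ + (1 - Fintype.card ι * p) * ⟪θ b, x⟫ := by
  simp [policyValue, clippedPolicy_apply_eq_add_ite, add_mul, sum_add_distrib, mul_sum]

lemma policyValue_clippedPolicy_sub (p : ℝ) (a b : ι) (θ : ι → E) (x : E) :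
    policyValue (clippedPolicy p a) θ x - policyValue (clippedPolicy p b) θ x =
      (1 - Fintype.card ι * p) * ⟪θ a - θ b, x⟫ := by
  rw [policyValue_clippedPolicy, policyValue_clippedPolicy, inner_sub_left]
  ring

end ClippedPolicy

section Greedy

variable {E : Type*} [NormedAddCommGroup E] [InnerProductSpace ℝ E]

lemma inner_sub_le_norm_sub_add_norm_sub {θ θ' h h' z : E} (hz : ‖z‖ ≤ 1)
    (hgreedy : ⟪h, z⟫ ≤ ⟪h', z⟫) : ⟪θ - θ', z⟫ ≤ ‖h - θ‖ + ‖h' - θ'‖ := by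
  have inner_le_norm (v : E) : ⟪v, z⟫ ≤ ‖v‖ :=
    (real_inner_le_norm v z).trans (mul_le_of_le_one_right (norm_nonneg v) hz)
  calc ⟪θ - θ', z⟫ = ⟪θ - h, z⟫ + (⟪h, z⟫ - ⟪h', z⟫) + ⟪h' - θ', z⟫ := by
        simp only [inner_sub_left]; ring
    _ ≤ ‖θ - h‖ + 0 + ‖h' - θ'‖ := by
        gcongr
        exacts [inner_le_norm _, sub_nonpos.mpr hgreedy, inner_le_norm _]
    _ = ‖h - θ‖ + ‖h' - θ'‖ := by rw [add_zero, norm_sub_rev]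

lemma one_sub_mul_inner_le_inner_add {v x e : E} {ρ : ℝ} (hv : 0 ≤ ⟪v, x⟫)
    (he : |⟪v, e⟫| ≤ ρ * |⟪v, x⟫|) : (1 - ρ) * ⟪v, x⟫ ≤ ⟪v, x + e⟫ := by
  rw [abs_of_nonneg hv] at he
  rw [inner_add_right]
  linarith [neg_le_of_abs_le he]

lemma inner_sub_le_of_greedy {ι : Type*} [Fintype ι] {θ θh : ι → E} {a b : ι} {x e : E} {ρ : ℝ}
    (hρ : ρ < 1) (hxe : ‖x + e‖ ≤ 1) (he : |⟪θ a - θ b, e⟫| ≤ ρ * |⟪θ a - θ b, x⟫|)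
    (hopt : ⟪θ b, x⟫ ≤ ⟪θ a, x⟫) (hgreedy : ⟪θh a, x + e⟫ ≤ ⟪θh b, x + e⟫) :
    ⟪θ a - θ b, x⟫ ≤ 2 / (1 - ρ) * ‖θh - θ‖ := by
  have hgap : 0 ≤ ⟪θ a - θ b, x⟫ := by rwa [inner_sub_left, sub_nonneg]
  have hbound : (1 - ρ) * ⟪θ a - θ b, x⟫ ≤ 2 * ‖θh - θ‖ := calc
    (1 - ρ) * ⟪θ a - θ b, x⟫ ≤ ⟪θ a - θ b, x + e⟫ := one_sub_mul_inner_le_inner_add hgap he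
    _ ≤ ‖(θh - θ) a‖ + ‖(θh - θ) b‖ := inner_sub_le_norm_sub_add_norm_sub hxe hgreedy
    _ ≤ ‖θh - θ‖ + ‖θh - θ‖ := add_le_add (norm_le_pi_norm _ a) (norm_le_pi_norm _ b)
    _ = 2 * ‖θh - θ‖ := (two_mul _).symm
  rwa [div_mul_eq_mul_div, le_div_iff₀' (sub_pos.mpr hρ)]

lemma policyValue_clippedPolicy_sub_le_of_greedy {ι : Type*} [Fintype ι] [DecidableEq ι]
    {θ θh : ι → E} {a b : ι} {x e : E} {ρ p : ℝ} (hρ : ρ < 1) (hp : Fintype.card ι * p ≤ 1)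
    (hxe : ‖x + e‖ ≤ 1) (he : |⟪θ a - θ b, e⟫| ≤ ρ * |⟪θ a - θ b, x⟫|)
    (hopt : ⟪θ b, x⟫ ≤ ⟪θ a, x⟫) (hgreedy : ⟪θh a, x + e⟫ ≤ ⟪θh b, x + e⟫) :
    policyValue (clippedPolicy p a) θ x - policyValue (clippedPolicy p b) θ x ≤
      2 * (1 - Fintype.card ι * p) / (1 - ρ) * ‖θh - θ‖ := by
  calc policyValue (clippedPolicy p a) θ x - policyValue (clippedPolicy p b) θ x
      = (1 - Fintype.card ι * p) * ⟪θ a - θ b, x⟫ := policyValue_clippedPolicy_sub p a b θ x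
    _ ≤ (1 - Fintype.card ι * p) * (2 / (1 - ρ) * ‖θh - θ‖) :=
        mul_le_mul_of_nonneg_left (inner_sub_le_of_greedy hρ hxe he hopt hgreedy)
          (sub_nonneg.mpr hp)
    _ = 2 * (1 - Fintype.card ι * p) / (1 - ρ) * ‖θh - θ‖ := by ring

end Greedy

section TwoArms

variable {E : Type*} [NormedAddCommGroup E] [InnerProductSpace ℝ E]

lemma policyValue_fin_two (q : Fin 2 → ℝ) (θ : Fin 2 → E) (x : E) :
    policyValue q θ x = q 0 * ⟪θ 0, x⟫ + q 1 * ⟪θ 1, x⟫ :=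
  Fin.sum_univ_two _

lemma sum_fin_two_eq_add_one_sub {M : Type*} [AddCommMonoid M] (f : Fin 2 → M) (b : Fin 2) :
    ∑ a, f a = f b + f (1 - b) := by
  fin_cases b <;> simp [add_comm]

lemma policyValue_clippedPolicy_fin_two (p : ℝ) (b : Fin 2) (θ : Fin 2 → E) (x : E) :
    policyValue (clippedPolicy p b) θ x = (1 - p) * ⟪θ b, x⟫ + p * ⟪θ (1 - b), x⟫ := by
  rw [policyValue_clippedPolicy, Fintype.card_fin, sum_fin_two_eq_add_one_sub _ b]
  push_cast
  ring

lemma eq_clippedPolicy_fin_two {q : Fin 2 → ℝ} {p : ℝ} {b : Fin 2} (hb : q b = 1 - p)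
    (hb' : q (1 - b) = p) : q = clippedPolicy p b := by
  have eq_or_eq_one_sub : ∀ a b : Fin 2, a = b ∨ a = 1 - b := by decide
  have one_sub_ne : ∀ b : Fin 2, 1 - b ≠ b := by decide
  ext a
  obtain rfl | rfl := eq_or_eq_one_sub a b
  · norm_num [clippedPolicy, hb]
  · rw [clippedPolicy, if_neg (one_sub_ne b), hb']

lemma pi_norm_fin_two {F : Type*} [SeminormedAddCommGroup F] (f : Fin 2 → F) :
    ‖f‖ = max ‖f 0‖ ‖f 1‖ := by
  simp [Pi.norm_def, univ_fin2]

lemma abs_inner_sub_le_fin_two {θ : Fin 2 → E} {x e : E} {ρ : ℝ}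
    (h : |⟪θ 1 - θ 0, e⟫| ≤ ρ * |⟪θ 1 - θ 0, x⟫|) (a b : Fin 2) :
    |⟪θ a - θ b, e⟫| ≤ ρ * |⟪θ a - θ b, x⟫| := by
  have hswap (y : E) : |⟪θ 0 - θ 1, y⟫| = |⟪θ 1 - θ 0, y⟫| := by
    rw [← neg_sub, inner_neg_left, abs_neg]
  fin_cases a <;> fin_cases b <;> simp [hswap, h]

end TwoArms

-- On `ι → E` the norm is the sup norm, so `‖θh t - θs‖` is the largest estimation error of an arm.
theorem stmt6_general {ι E : Type*} [Fintype ι] [DecidableEq ι] [NormedAddCommGroup E]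
    [InnerProductSpace ℝ E] {T₀ T : ℕ} (hT : T₀ ≤ T) {R ρ p : ℝ} (hρ : ρ < 1) (hp : 0 ≤ p)
    (hcard : Fintype.card ι * p ≤ 1) {θs : ι → E} (hθ : ∀ a, ‖θs a‖ ≤ R) {x ε : ℕ → E}
    (hx : ∀ t ∈ Icc 1 T₀, ‖x t‖ ≤ 1) (hxt : ∀ t ∈ Icc (T₀ + 1) T, ‖x t + ε t‖ ≤ 1)
    (hε : ∀ t ∈ Icc (T₀ + 1) T, ∀ a b, |⟪θs a - θs b, ε t⟫| ≤ ρ * |⟪θs a - θs b, x t⟫|)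
    {π : ℕ → ι → ℝ} (hπwarm : ∀ t ∈ Icc 1 T₀, π t ∈ stdSimplex ℝ ι) {θh : ℕ → ι → E}
    {atil : ℕ → ι}
    (hgreedy : ∀ t ∈ Icc (T₀ + 1) T, ∀ a, ⟪θh t a, x t + ε t⟫ ≤ ⟪θh t (atil t), x t + ε t⟫)
    (hπgreedy : ∀ t ∈ Icc (T₀ + 1) T, π t = clippedPolicy p (atil t)) {astar : ℕ → ι}
    (hastar : ∀ t ∈ Icc (T₀ + 1) T, ∀ a, ⟪θs a, x t⟫ ≤ ⟪θs (astar t), x t⟫) :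
    ∑ t ∈ Icc 1 T,
        (policyValue (clippedPolicy p (astar t)) θs (x t) - policyValue (π t) θs (x t)) ≤
      2 * T₀ * R + 2 * (1 - Fintype.card ι * p) / (1 - ρ) *
        ∑ t ∈ Icc (T₀ + 1) T, ‖θh t - θs‖ := by
  set regret : ℕ → ℝ := fun t =>
    policyValue (clippedPolicy p (astar t)) θs (x t) - policyValue (π t) θs (x t)
  have hwarm : ∑ t ∈ Icc 1 T₀, regret t ≤ 2 * T₀ * R := calc
    ∑ t ∈ Icc 1 T₀, regret t ≤ #(Icc 1 T₀) • (2 * R) := sum_le_card_nsmul _ _ _ fun t ht =>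
      policyValue_sub_policyValue_le (clippedPolicy_mem_stdSimplex hp hcard _) (hπwarm t ht) hθ
        (hx t ht)
    _ = 2 * T₀ * R := by rw [Nat.card_Icc, Nat.add_sub_cancel, nsmul_eq_mul]; ring
  have hexploit : ∑ t ∈ Icc (T₀ + 1) T, regret t ≤
      2 * (1 - Fintype.card ι * p) / (1 - ρ) * ∑ t ∈ Icc (T₀ + 1) T, ‖θh t - θs‖ := by
    rw [mul_sum]
    refine sum_le_sum fun t ht => ?_
    simp only [regret, hπgreedy t ht]
    exact policyValue_clippedPolicy_sub_le_of_greedy hρ hcard (hxt t ht) (hε t ht _ _)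
      (hastar t ht _) (hgreedy t ht _)
  have hsplit : ∑ t ∈ Icc 1 T, regret t =
      ∑ t ∈ Icc 1 T₀, regret t + ∑ t ∈ Icc (T₀ + 1) T, regret t := by
    simpa only [← Icc_add_one_left_eq_Ioc, zero_add] using
      (sum_Ioc_consecutive regret T₀.zero_le hT).symm
  exact hsplit.trans_le (add_le_add hwarm hexploit)

theorem stmt6 (d : ℕ) (hd : 1 ≤ d) (T₀ T : ℕ) (hT : T₀ < T)
    (Rθ ρ p₀ : ℝ) (hRθ : 0 < Rθ) (hρ : ρ ∈ Set.Ioo (0:ℝ) 1)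
    (hp₀ : p₀ ∈ Set.Ioc (0:ℝ) (1/2))
    (θs : Fin 2 → EuclideanSpace ℝ (Fin d)) (hθ : ∀ a, ‖θs a‖ ≤ Rθ)
    (x ε : ℕ → EuclideanSpace ℝ (Fin d))
    (hx : ∀ t ∈ Finset.Icc 1 T, ‖x t‖ ≤ 1)
    (hxt : ∀ t ∈ Finset.Icc 1 T, ‖x t + ε t‖ ≤ 1)
    (hε : ∀ t ∈ Finset.Icc 1 T,
      |⟪θs 1 - θs 0, ε t⟫| ≤ ρ * |⟪θs 1 - θs 0, x t⟫|)
    (π : ℕ → Fin 2 → ℝ)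
    (hπwarm : ∀ t ∈ Finset.Icc 1 T₀, (∀ a, p₀ ≤ π t a) ∧ π t 0 + π t 1 = 1)
    (θh : ℕ → Fin 2 → EuclideanSpace ℝ (Fin d))
    (atil : ℕ → Fin 2)
    (hgreedy : ∀ t ∈ Finset.Icc (T₀+1) T,
      ∀ a, ⟪θh t a, x t + ε t⟫ ≤ ⟪θh t (atil t), x t + ε t⟫)
    (hπgreedy : ∀ t ∈ Finset.Icc (T₀+1) T,
      π t (atil t) = 1 - p₀ ∧ π t (1 - atil t) = p₀)
    (astar : ℕ → Fin 2)
    (hastar : ∀ t ∈ Finset.Icc 1 T, ∀ a, ⟪θs a, x t⟫ ≤ ⟪θs (astar t), x t⟫) :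
    ∑ t ∈ Finset.Icc 1 T,
        (((1 - p₀) * ⟪θs (astar t), x t⟫ + p₀ * ⟪θs (1 - astar t), x t⟫)
          - (π t 0 * ⟪θs 0, x t⟫ + π t 1 * ⟪θs 1, x t⟫))
      ≤ 2 * T₀ * Rθ + (2 * (1 - 2 * p₀) / (1 - ρ)) *
          ∑ t ∈ Finset.Icc (T₀+1) T, max ‖θh t 0 - θs 0‖ ‖θh t 1 - θs 1‖ := by
  have hwarm : Icc 1 T₀ ⊆ Icc 1 T := Icc_subset_Icc_right hT.le
  have hexploit : Icc (T₀ + 1) T ⊆ Icc 1 T := Icc_subset_Icc_left (Nat.le_add_left 1 T₀)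
  have hcard : (Fintype.card (Fin 2) : ℝ) * p₀ ≤ 1 := by
    norm_num
    linarith [hp₀.2]
  simpa only [policyValue_clippedPolicy_fin_two, policyValue_fin_two (π _),
    pi_norm_fin_two, Pi.sub_apply, Fintype.card_fin, Nat.cast_ofNat] using
    stmt6_general hT.le hρ.2 hp₀.1.le hcard hθ (fun t ht => hx t (hwarm ht))
      (fun t ht => hxt t (hexploit ht))
      (fun t ht => abs_inner_sub_le_fin_two (hε t (hexploit ht)))
      (fun t ht => ⟨fun a => hp₀.1.le.trans ((hπwarm t ht).1 a),
        (Fin.sum_univ_two _).trans (hπwarm t ht).2⟩)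
      hgreedy (fun t ht => eq_clippedPolicy_fin_two (hπgreedy t ht).1 (hπgreedy t ht).2)
      (fun t ht => hastar t (hexploit ht))
end

section
/- Fix an integer T ≥ 1, a nonempty set S ⊆ {1,…,T} of update times with s_min := min S, constants R_θ > 0 and ρ ∈ (0,1), and θ*_0, θ*_1 ∈ ℝ^d with ‖θ*_a‖₂ ≤ R_θ. For each t ∈ {1,…,T} let x_t, ε_t ∈ ℝ^d with ‖x_t‖₂ ≤ 1, x̃_t := x_t + ε_t, ‖x̃_t‖₂ ≤ 1, and |⟨θ*_1 − θ*_0, ε_t⟩| ≤ ρ·|⟨θ*_1 − θ*_0, x_t⟩|. Let p₀^{(t)} ∈ (0, 1/2]. For each s ∈ S let θ̂_0^{(s)}, θ̂_1^{(s)} ∈ ℝ^d be arbitrary. For t ≤ s_min let π_t(0), π_t(1) ≥ p₀^{(t)} be arbitrary with π_t(0)+π_t(1)=1; for t > s_min let s_t := max{s ∈ S : s < t}, let ã_t ∈ argmax_{a∈{0,1}} ⟨θ̂_a^{(s_t)}, x̃_t⟩, and set π_t(ã_t) = 1 − p₀^{(t)}, π_t(1−ã_t) = p₀^{(t)}. Let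 a*_t ∈ argmax_{a∈{0,1}} ⟨θ*_a, x_t⟩. Then for every T₀ with s_min ≤ T₀ < T, Σ_{t=1}^T [⟨θ*_{a*_t}, x_t⟩ − Σ_{a∈{0,1}} π_t(a)·⟨θ*_a, x_t⟩] ≤ 2·T₀·R_θ + (2/(1−ρ))·Σ_{t=T₀+1}^T (p₀^{(t)}·R_θ + max_{a∈{0,1}} ‖θ̂_a^{(s_t)} − θ*_a‖₂). -/
open RealInnerProductSpace Finset

/-!
The regret of a round is the `π`-average of the gaps `⟪θ c - θ a, x⟫`, each at most `2 * R`. The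
greedy arm does better: since it wins at the perturbed context `x + e` under the estimates, its gap
at `x + e` is at most twice the estimation error `M`, and the perturbation removes at most a
fraction `ρ` of the gap at `x`. So a greedy round costs at most `2 * M / (1 - ρ)`, plus `2 * R`
times the probability of exploring, while each of the first `T₀` rounds costs at most `2 * R`.
-/

section Simplex

variable {ι : Type*} [Fintype ι] {w f : ι → ℝ} {A B p : ℝ}

lemma sum_mul_le_of_mem_stdSimplex (hw : w ∈ stdSimplex ℝ ι) (hf : ∀ i, f i ≤ B) :
    ∑ i, w i * f i ≤ B :=
  calc ∑ i, w i * f i ≤ ∑ i, w i * B :=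
        sum_le_sum fun i _ ↦ mul_le_mul_of_nonneg_left (hf i) (hw.1 i)
    _ = B := by rw [← sum_mul, hw.2, one_mul]

lemma sum_mul_le_add_of_mem_stdSimplex (hw : w ∈ stdSimplex ℝ ι) {i : ι} (hi : 1 - p ≤ w i)
    (hA : 0 ≤ A) (hB : 0 ≤ B) (hfi : f i ≤ A) (hf : ∀ j, f j ≤ B) :
    ∑ j, w j * f j ≤ A + p * B := by
  classical
  have hrest : ∑ j ∈ univ.erase i, w j = 1 - w i := by
    rw [sum_erase_eq_sub (mem_univ i), hw.2]
  have hwi : w i ≤ 1 := (single_le_sum (fun j _ ↦ hw.1 j) (mem_univ i)).trans_eq hw.2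
  calc ∑ j, w j * f j = w i * f i + ∑ j ∈ univ.erase i, w j * f j :=
        (add_sum_erase _ _ (mem_univ i)).symm
    _ ≤ w i * A + ∑ j ∈ univ.erase i, w j * B := by
        gcongr with j
        exacts [hw.1 i, hw.1 j, hf j]
    _ = w i * A + (1 - w i) * B := by rw [← sum_mul, hrest]
    _ ≤ A + p * B := by
        gcongr
        · exact mul_le_of_le_one_left hA hwi
        · linarith

lemma mem_stdSimplex_fin_two_of_eq {w : Fin 2 → ℝ} {a : Fin 2} (hp : p ∈ Set.Icc (0 : ℝ) 1)
    (ha : w a = 1 - p) (hb : w (1 - a) = p) : w ∈ stdSimplex ℝ (Fin 2) := by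
  obtain ⟨hp0, hp1⟩ := hp
  obtain ⟨hw0, hw1, hsum⟩ : 0 ≤ w 0 ∧ 0 ≤ w 1 ∧ w 0 + w 1 = 1 := by
    rcases Fin.exists_fin_two.1 ⟨a, rfl⟩ with rfl | rfl
    · rw [sub_zero] at hb
      exact ⟨by linarith, by linarith, by linarith⟩
    · rw [sub_self] at hb
      exact ⟨by linarith, by linarith, by linarith⟩
  exact ⟨Fin.forall_fin_two.2 ⟨hw0, hw1⟩, (Fin.sum_univ_two w).trans hsum⟩

end Simplex

section Gap

variable {E : Type*} [NormedAddCommGroup E] [InnerProductSpace ℝ E]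
  {a b ah bh x y e : E} {ρ M R : ℝ}

lemma real_inner_le_of_norm_le (hx : ‖x‖ ≤ R) (hy : ‖y‖ ≤ 1) : ⟪x, y⟫ ≤ R :=
  (real_inner_le_norm x y).trans <| (mul_le_of_le_one_right (norm_nonneg x) hy).trans hx

lemma real_inner_sub_le_two_mul (ha : ‖a‖ ≤ R) (hb : ‖b‖ ≤ R) (hy : ‖y‖ ≤ 1) :
    ⟪b - a, y⟫ ≤ 2 * R :=
  real_inner_le_of_norm_le ((norm_sub_le_of_le hb ha).trans_eq (two_mul R).symm) hy

lemma real_inner_sub_le_of_estimate_le (hy : ‖y‖ ≤ 1) (ha : ‖ah - a‖ ≤ M) (hb : ‖bh - b‖ ≤ M)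
    (h : ⟪bh, y⟫ ≤ ⟪ah, y⟫) : ⟪b - a, y⟫ ≤ 2 * M := by
  have herr_a : ⟪ah - a, y⟫ ≤ M := real_inner_le_of_norm_le ha hy
  have herr_b : ⟪b - bh, y⟫ ≤ M := real_inner_le_of_norm_le (norm_sub_rev bh b ▸ hb) hy
  rw [inner_sub_left] at herr_a herr_b ⊢
  linarith

lemma real_inner_sub_le_div_of_estimate_le (hρ : ρ < 1) (hxe : ‖x + e‖ ≤ 1)
    (he : |⟪b - a, e⟫| ≤ ρ * |⟪b - a, x⟫|) (ha : ‖ah - a‖ ≤ M) (hb : ‖bh - b‖ ≤ M)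
    (h : ⟪bh, x + e⟫ ≤ ⟪ah, x + e⟫) : ⟪b - a, x⟫ ≤ 2 * M / (1 - ρ) := by
  have hρ' : 0 < 1 - ρ := sub_pos.2 hρ
  have hM : 0 ≤ M := (norm_nonneg _).trans ha
  rcases le_total ⟪b - a, x⟫ 0 with hneg | hpos
  · exact hneg.trans (by positivity)
  · have hgap := real_inner_sub_le_of_estimate_le hxe ha hb h
    rw [inner_add_right] at hgap
    rw [abs_of_nonneg hpos] at he
    rw [le_div_iff₀ hρ']
    linarith [neg_abs_le ⟪b - a, e⟫]

lemma abs_real_inner_sub_le_of_fin_two {θ : Fin 2 → E}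
    (h : |⟪θ 1 - θ 0, e⟫| ≤ ρ * |⟪θ 1 - θ 0, x⟫|) (i j : Fin 2) :
    |⟪θ i - θ j, e⟫| ≤ ρ * |⟪θ i - θ j, x⟫| := by
  have h' : |⟪θ 0 - θ 1, e⟫| ≤ ρ * |⟪θ 0 - θ 1, x⟫| := by
    simpa only [← neg_sub (θ 1), inner_neg_left, abs_neg] using h
  fin_cases i <;> fin_cases j <;> simp [h, h']

end Gap

section Regret

variable {ι E : Type*} [Fintype ι] [NormedAddCommGroup E] [InnerProductSpace ℝ E]
  {θ θh : ι → E} {x e : E} {π : ι → ℝ} {g : ι} {ρ M R p : ℝ}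

/-- The expected regret, against a comparator arm `c`, of one round of a linear bandit with arm
parameters `θ` and context `x`, when the arm is drawn from `π`. Allowing an arbitrary comparator
makes the regret against the best arm a special case. -/
noncomputable def roundRegret (θ : ι → E) (x : E) (π : ι → ℝ) (c : ι) : ℝ :=
  ⟪θ c, x⟫ - ∑ a, π a * ⟪θ a, x⟫

lemma roundRegret_eq_sum_gap (hπ : ∑ a, π a = 1) (c : ι) :
    roundRegret θ x π c = ∑ a, π a * ⟪θ c - θ a, x⟫ := by
  simp only [roundRegret, inner_sub_left, mul_sub, sum_sub_distrib, ← sum_mul, hπ, one_mul]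

lemma roundRegret_le_two_mul (hθ : ∀ a, ‖θ a‖ ≤ R) (hx : ‖x‖ ≤ 1) (hπ : π ∈ stdSimplex ℝ ι)
    (c : ι) : roundRegret θ x π c ≤ 2 * R := by
  rw [roundRegret_eq_sum_gap hπ.2]
  exact sum_mul_le_of_mem_stdSimplex hπ fun a ↦ real_inner_sub_le_two_mul (hθ a) (hθ c) hx

lemma roundRegret_le_of_greedy (hρ : ρ < 1) (hθ : ∀ a, ‖θ a‖ ≤ R) (hx : ‖x‖ ≤ 1)
    (hxe : ‖x + e‖ ≤ 1) (he : ∀ a b, |⟪θ a - θ b, e⟫| ≤ ρ * |⟪θ a - θ b, x⟫|)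
    (hM : ∀ a, ‖θh a - θ a‖ ≤ M) (hg : ∀ a, ⟪θh a, x + e⟫ ≤ ⟪θh g, x + e⟫)
    (hπ : π ∈ stdSimplex ℝ ι) (hπg : 1 - p ≤ π g) (c : ι) :
    roundRegret θ x π c ≤ 2 * M / (1 - ρ) + p * (2 * R) := by
  have hM0 : 0 ≤ 2 * M := mul_nonneg two_pos.le ((norm_nonneg _).trans (hM g))
  have hR0 : 0 ≤ 2 * R := mul_nonneg two_pos.le ((norm_nonneg _).trans (hθ g))
  rw [roundRegret_eq_sum_gap hπ.2]
  exact sum_mul_le_add_of_mem_stdSimplex hπ hπg (div_nonneg hM0 (sub_pos.2 hρ).le) hR0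
    (real_inner_sub_le_div_of_estimate_le hρ hxe (he c g) (hM g) (hM c) (hg c))
    fun a ↦ real_inner_sub_le_two_mul (hθ a) (hθ c) hx

lemma roundRegret_le_mul_of_greedy (hρ : ρ ∈ Set.Ico (0 : ℝ) 1) (hθ : ∀ a, ‖θ a‖ ≤ R)
    (hx : ‖x‖ ≤ 1) (hxe : ‖x + e‖ ≤ 1) (he : ∀ a b, |⟪θ a - θ b, e⟫| ≤ ρ * |⟪θ a - θ b, x⟫|)
    (hM : ∀ a, ‖θh a - θ a‖ ≤ M) (hg : ∀ a, ⟪θh a, x + e⟫ ≤ ⟪θh g, x + e⟫)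
    (hπ : π ∈ stdSimplex ℝ ι) (hπg : 1 - p ≤ π g) (c : ι) :
    roundRegret θ x π c ≤ 2 / (1 - ρ) * (p * R + M) := by
  have hp : 0 ≤ p := by
    linarith [(single_le_sum (fun a _ ↦ hπ.1 a) (mem_univ g)).trans_eq hπ.2]
  have hpR : 0 ≤ p * R := mul_nonneg hp ((norm_nonneg _).trans (hθ g))
  have htwo : 2 ≤ 2 / (1 - ρ) := le_div_self two_pos.le (sub_pos.2 hρ.2) (sub_le_self 1 hρ.1)
  calc roundRegret θ x π c ≤ 2 * M / (1 - ρ) + p * (2 * R) :=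
        roundRegret_le_of_greedy hρ.2 hθ hx hxe he hM hg hπ hπg c
    _ = 2 / (1 - ρ) * M + 2 * (p * R) := by ring
    _ ≤ 2 / (1 - ρ) * M + 2 / (1 - ρ) * (p * R) := by gcongr
    _ = 2 / (1 - ρ) * (p * R + M) := by ring

end Regret

lemma sum_Icc_one_le_mul_add_sum {f h : ℕ → ℝ} {B : ℝ} {T₀ T : ℕ} (hT : T₀ ≤ T)
    (hearly : ∀ t ∈ Icc 1 T₀, f t ≤ B) (hlate : ∀ t ∈ Icc (T₀ + 1) T, f t ≤ h t) :
    ∑ t ∈ Icc 1 T, f t ≤ T₀ * B + ∑ t ∈ Icc (T₀ + 1) T, h t := by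
  have hsplit : ∑ t ∈ Icc 1 T, f t = ∑ t ∈ Icc 1 T₀, f t + ∑ t ∈ Icc (T₀ + 1) T, f t := by
    simpa only [← Ico_add_one_right_eq_Icc] using
      (sum_Ico_consecutive f (Nat.le_add_left 1 T₀) (Nat.add_le_add_right hT 1)).symm
  rw [hsplit]
  gcongr with t ht
  · simpa using sum_le_card_nsmul _ _ _ hearly
  · exact hlate t ht

theorem stmt9_general {ι E : Type*} [Fintype ι] [NormedAddCommGroup E] [InnerProductSpace ℝ E]
    {T₀ T : ℕ} (hT : T₀ ≤ T) {R ρ : ℝ} (hρ : ρ ∈ Set.Ico (0 : ℝ) 1)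
    {θ : ι → E} (hθ : ∀ a, ‖θ a‖ ≤ R) {x ε : ℕ → E} (hx : ∀ t ∈ Icc 1 T, ‖x t‖ ≤ 1)
    (hxε : ∀ t ∈ Icc (T₀ + 1) T, ‖x t + ε t‖ ≤ 1)
    (hε : ∀ t ∈ Icc (T₀ + 1) T, ∀ a b, |⟪θ a - θ b, ε t⟫| ≤ ρ * |⟪θ a - θ b, x t⟫|)
    {θh : ℕ → ι → E} {M : ℕ → ℝ} (hM : ∀ t ∈ Icc (T₀ + 1) T, ∀ a, ‖θh t a - θ a‖ ≤ M t)
    {g : ℕ → ι} (hg : ∀ t ∈ Icc (T₀ + 1) T, ∀ a, ⟪θh t a, x t + ε t⟫ ≤ ⟪θh t (g t), x t + ε t⟫)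
    {π : ℕ → ι → ℝ} (hπ : ∀ t ∈ Icc 1 T, π t ∈ stdSimplex ℝ ι)
    {p : ℕ → ℝ} (hπg : ∀ t ∈ Icc (T₀ + 1) T, 1 - p t ≤ π t (g t)) (c : ℕ → ι) :
    ∑ t ∈ Icc 1 T, roundRegret θ (x t) (π t) (c t) ≤
      2 * T₀ * R + 2 / (1 - ρ) * ∑ t ∈ Icc (T₀ + 1) T, (p t * R + M t) := by
  have hearly : Icc 1 T₀ ⊆ Icc 1 T := Icc_subset_Icc_right hT
  have hlate : Icc (T₀ + 1) T ⊆ Icc 1 T := Icc_subset_Icc_left (Nat.le_add_left 1 T₀)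
  rw [mul_comm 2 (T₀ : ℝ), mul_assoc, mul_sum]
  exact sum_Icc_one_le_mul_add_sum hT
    (fun t ht ↦ roundRegret_le_two_mul hθ (hx t (hearly ht)) (hπ t (hearly ht)) (c t))
    (fun t ht ↦ roundRegret_le_mul_of_greedy hρ hθ (hx t (hlate ht)) (hxε t ht) (hε t ht)
      (hM t ht) (hg t ht) (hπ t (hlate ht)) (hπg t ht) (c t))

theorem stmt9 (d : ℕ) (hd : 1 ≤ d) (T : ℕ) (hT : 1 ≤ T)
    (S : Finset ℕ) (hSne : S.Nonempty) (hSsub : ∀ s ∈ S, s ∈ Finset.Icc 1 T)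
    (Rθ ρ : ℝ) (hRθ : 0 < Rθ) (hρ : ρ ∈ Set.Ioo (0:ℝ) 1)
    (θs : Fin 2 → EuclideanSpace ℝ (Fin d)) (hθ : ∀ a, ‖θs a‖ ≤ Rθ)
    (x ε : ℕ → EuclideanSpace ℝ (Fin d))
    (hx : ∀ t ∈ Finset.Icc 1 T, ‖x t‖ ≤ 1)
    (hxt : ∀ t ∈ Finset.Icc 1 T, ‖x t + ε t‖ ≤ 1)
    (hε : ∀ t ∈ Finset.Icc 1 T,
      |⟪θs 1 - θs 0, ε t⟫| ≤ ρ * |⟪θs 1 - θs 0, x t⟫|)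
    (p₀ : ℕ → ℝ) (hp₀ : ∀ t ∈ Finset.Icc 1 T, p₀ t ∈ Set.Ioc (0:ℝ) (1/2))
    (θh : ℕ → Fin 2 → EuclideanSpace ℝ (Fin d))
    (st : ℕ → ℕ)
    (hst : ∀ t, S.min' hSne < t →
      st t ∈ S ∧ st t < t ∧ ∀ s ∈ S, s < t → s ≤ st t)
    (π : ℕ → Fin 2 → ℝ)
    (hπwarm : ∀ t ∈ Finset.Icc 1 (S.min' hSne),
      (∀ a, p₀ t ≤ π t a) ∧ π t 0 + π t 1 = 1)
    (atil : ℕ → Fin 2)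
    (hgreedy : ∀ t ∈ Finset.Icc (S.min' hSne + 1) T,
      ∀ a, ⟪θh (st t) a, x t + ε t⟫ ≤ ⟪θh (st t) (atil t), x t + ε t⟫)
    (hπgreedy : ∀ t ∈ Finset.Icc (S.min' hSne + 1) T,
      π t (atil t) = 1 - p₀ t ∧ π t (1 - atil t) = p₀ t)
    (astar : ℕ → Fin 2)
    (hastar : ∀ t ∈ Finset.Icc 1 T, ∀ a, ⟪θs a, x t⟫ ≤ ⟪θs (astar t), x t⟫) :
    ∀ T₀ : ℕ, S.min' hSne ≤ T₀ → T₀ < T →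
      ∑ t ∈ Finset.Icc 1 T,
          (⟪θs (astar t), x t⟫ - (π t 0 * ⟪θs 0, x t⟫ + π t 1 * ⟪θs 1, x t⟫))
        ≤ 2 * T₀ * Rθ + (2 / (1 - ρ)) *
            ∑ t ∈ Finset.Icc (T₀+1) T,
              (p₀ t * Rθ + max ‖θh (st t) 0 - θs 0‖ ‖θh (st t) 1 - θs 1‖) := by
  intro T₀ hS hT₀
  have hlate : Icc (T₀ + 1) T ⊆ Icc 1 T := Icc_subset_Icc_left (Nat.le_add_left 1 T₀)
  have hmodel : Icc (T₀ + 1) T ⊆ Icc (S.min' hSne + 1) T := Icc_subset_Icc_left (by lia)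
  have hπ (t : ℕ) (ht : t ∈ Icc 1 T) : π t ∈ stdSimplex ℝ (Fin 2) := by
    obtain ⟨h1t, htT⟩ := mem_Icc.1 ht
    obtain ⟨hp, hp'⟩ := hp₀ t ht
    rcases le_or_gt t (S.min' hSne) with h | h
    · obtain ⟨hle, hsum⟩ := hπwarm t (mem_Icc.2 ⟨h1t, h⟩)
      exact ⟨fun a ↦ hp.le.trans (hle a), (Fin.sum_univ_two _).trans hsum⟩
    · obtain ⟨hgr, hexp⟩ := hπgreedy t (mem_Icc.2 ⟨h, htT⟩)
      exact mem_stdSimplex_fin_two_of_eq ⟨hp.le, by linarith⟩ hgr hexp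
  simpa only [roundRegret, Fin.sum_univ_two] using
    stmt9_general hT₀.le (Set.Ioo_subset_Ico_self hρ) hθ hx (fun t ht ↦ hxt t (hlate ht))
      (fun t ht ↦ abs_real_inner_sub_le_of_fin_two (hε t (hlate ht)))
      (fun t _ ↦ Fin.forall_fin_two.2 ⟨le_max_left _ _, le_max_right _ _⟩)
      (fun t ht ↦ hgreedy t (hmodel ht)) hπ (fun t ht ↦ (hπgreedy t (hmodel ht)).1.ge) astar
end
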